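/- Let K be a complex Hilbert space with a Hilbert basis (e_i)_{i ∈ ι}, let J be a type, and let E := ℓ²(J, K) (this realizes the Hilbert-space tensor product H ⊗ K for H = ℓ²(J)). For a bounded operator T on K let T̂ denote the bounded operator on E of pointwise application, (T̂ f)(j) = T(f j) (realizing 1 ⊗ T). Let W be a bounded operator on E which is a partial isometry (W ∘ W* ∘ W = W), with initial subspace M := (ker W)^⊥. Assume: (i) for every i ∈ ι there exists a nonzero c ∈ ℓ²(J, ℂ) such that the element (j ↦ c_j • e_i) of E lies in M (realizing v ⊗ e_i ∈ M with v ≠ 0); (ii) A is a star-subalgebra of the bounded operators on K such that T̂(M) ⊆ M for every T ∈ A. Then the map A ∋ T ↦ W ∘ T̂ ∘ W* is injective; that is, if T ∈ A satisfies W ∘ T̂ ∘ W* = 0 then T = 0. -/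

import Mathlib

open ContinuousLinearMap

/-- Let `K` be a complex Hilbert space with Hilbert basis `(e i)`, `E = ℓ²(J, K)`
(realizing `ℓ²(J) ⊗ K`), `hat` the "pointwise application" lift `T ↦ 1 ⊗ T`,
`W` a partial isometry on `E` with initial subspace `M = (ker W)ᗮ` such that for each `i`
some nonzero simple tensor `v ⊗ e i` lies in `M`, and `A` a star-subalgebra of `B(K)`
with `(1 ⊗ T)(M) ⊆ M` for all `T ∈ A`. Then `T ↦ W (1 ⊗ T) W*` is injective on `A`. -/
theorem stmt4 {K : Type*} [NormedAddCommGroup K] [InnerProductSpace ℂ K] [CompleteSpace K]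
    {ι : Type*} (e : HilbertBasis ι ℂ K) (J : Type*)
    (hat : (K →L[ℂ] K) → (lp (fun _ : J => K) 2 →L[ℂ] lp (fun _ : J => K) 2))
    (hhat : ∀ (T : K →L[ℂ] K) (f : lp (fun _ : J => K) 2) (j : J), hat T f j = T (f j))
    (W : lp (fun _ : J => K) 2 →L[ℂ] lp (fun _ : J => K) 2)
    (hWpi : W.comp ((adjoint W).comp W) = W)
    (hbasis : ∀ i : ι, ∃ c : lp (fun _ : J => ℂ) 2, c ≠ 0 ∧
      ∃ v : lp (fun _ : J => K) 2, (∀ j : J, v j = c j • e i) ∧ v ∈ (LinearMap.ker W.toLinearMap)ᗮ)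
    (A : StarSubalgebra ℂ (K →L[ℂ] K))
    (hinv : ∀ T ∈ A, ∀ m ∈ (LinearMap.ker W.toLinearMap)ᗮ, hat T m ∈ (LinearMap.ker W.toLinearMap)ᗮ) :
    ∀ T ∈ A, W.comp ((hat T).comp (adjoint W)) = 0 → T = 0 := by
  intro T hT h0
  have key : ∀ x ∈ (LinearMap.ker W.toLinearMap)ᗮ, W x = 0 → x = 0 := by
    intro x hx hWx
    have h1 : inner ℂ x x = 0 := hx x (by simpa using hWx)
    exact inner_self_eq_zero.mp h1
  have hadj : ∀ y, adjoint W y ∈ (LinearMap.ker W.toLinearMap)ᗮ := by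
    intro y x hx
    have hx' : W x = 0 := by simpa using hx
    rw [adjoint_inner_right, hx', inner_zero_left]
  have hTe : ∀ i, T (e i) = 0 := by
    intro i
    obtain ⟨c, hc, v, hv, hvM⟩ := hbasis i
    have hpi : W (adjoint W (W v)) = W v := DFunLike.congr_fun hWpi v
    have hfix : adjoint W (W v) = v := by
      have := key (adjoint W (W v) - v) (Submodule.sub_mem _ (hadj _) hvM)
        (by rw [map_sub, hpi, sub_self])
      exact sub_eq_zero.mp this
    have h1 : W (hat T (adjoint W (W v))) = 0 := DFunLike.congr_fun h0 (W v)
    rw [hfix] at h1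
    have h2 : hat T v = 0 := key _ (hinv T hT v hvM) h1
    by_contra hne
    apply hc
    ext j
    have h3 := hhat T v j
    rw [h2, hv j, map_smul] at h3
    have h4 : c j • T (e i) = 0 := by rw [← h3]; rfl
    simpa using (smul_eq_zero.mp h4).resolve_right hne
  refine ContinuousLinearMap.ext_on (s := Set.range e) ?_ ?_
  · exact Submodule.dense_iff_topologicalClosure_eq_top.mpr e.dense_span
  · rintro _ ⟨i, rfl⟩
    simpa using hTe i
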